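/- Fix a real number T. There exists a constant C = C(T) > 0 such that for every integer N ≥ 3 and every primitive Dirichlet character χ modulo N for which GRH(χ) holds, one has L(1 + 2iT, χ) ≠ 0 and |L″(1 + 2iT, χ) / L(1 + 2iT, χ)| ≤ C · (log log N)². -/

import Mathlib

open Complex

/-- GRH for a single Dirichlet L-function: every zero of `L(s, χ)` in the critical strip
`0 < Re(s) < 1` lies on the critical line `Re(s) = 1/2`. -/
def GRHFor {N : ℕ} [NeZero N] (χ : DirichletCharacter ℂ N) : Prop :=
  ∀ s : ℂ, 0 < s.re → s.re < 1 → DirichletCharacter.LFunction χ s = 0 → s.re = 1 / 2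

/-!
Write `Q` for a multiple of `N (|t| + 4)`. Under GRH, `L(w, χ)` has no zero in the disc of radius
`3 / 2` about `2 + it`, where partial summation bounds it by `Q`; since `|L(2 + it, χ)| ≥ 1 / 2`,
the Borel–Carathéodory theorem applied to `log L` gives `L′/L ≪ log Q` up to radius `5 / 4`.
Up to radius `1 - δ`, Chebyshev's bound for `ψ` gives `L′/L ≪ 1 / δ`. Hadamard's three circles
theorem with `δ ≍ 1 / log log Q` interpolates between the two bounds and gives `L′/L ≪ log log Q`
up to radius `1 + δ`, hence near `1 + it`. Cauchy's estimate on a disc of radius `δ` turns this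
into `L″/L = (L′/L)′ + (L′/L)² ≪ (log log Q)²`.
-/

open Filter Metric Set
open scoped Topology

section ElementaryInequalities

theorem one_lt_log_of_three_le {x : ℝ} (hx : 3 ≤ x) : 1 < Real.log x :=
  (Real.lt_log_iff_exp_lt (by linarith)).mpr (Real.exp_one_lt_three.trans_le hx)

theorem log_sub_log_one_sub_le {d δ : ℝ} (hδ : δ ≤ 1 / 3) (hd : 1 - δ ≤ d) (hd' : d ≤ 1 + δ) :
    Real.log d - Real.log (1 - δ) ≤ 3 * δ := by
  have hpos : 0 < 1 - δ := by linarith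
  have hdpos : 0 < d := hpos.trans_le hd
  calc Real.log d - Real.log (1 - δ) = Real.log (d / (1 - δ)) :=
        (Real.log_div hdpos.ne' hpos.ne').symm
    _ ≤ d / (1 - δ) - 1 := Real.log_le_sub_one_of_pos (div_pos hdpos hpos)
    _ ≤ 3 * δ := by
        rw [sub_le_iff_le_add, div_le_iff₀ hpos]
        nlinarith

theorem exists_log_mul_log_mul_le {a b : ℝ} (ha : 1 ≤ a) (hb : 1 ≤ b) :
    ∃ C : ℝ, 0 < C ∧ ∀ x : ℝ, 3 ≤ x →
      Real.log (a * Real.log (x * b)) ≤ C * Real.log (Real.log x) := by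
  have hlogb : 0 ≤ Real.log b := Real.log_nonneg hb
  have hloglog3 : 0 < Real.log (Real.log 3) := Real.log_pos (one_lt_log_of_three_le le_rfl)
  set A : ℝ := a * (1 + Real.log b) with hA
  have hA1 : 1 ≤ A := one_le_mul_of_one_le_of_one_le ha (by linarith)
  have hlogA : 0 ≤ Real.log A := Real.log_nonneg hA1
  refine ⟨Real.log A / Real.log (Real.log 3) + 1, by positivity, fun x hx ↦ ?_⟩
  have hlogx : 1 < Real.log x := one_lt_log_of_three_le hx
  have hloglog : Real.log (Real.log 3) ≤ Real.log (Real.log x) :=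
    Real.log_le_log (by linarith [one_lt_log_of_three_le le_rfl])
      (Real.log_le_log (by norm_num) hx)
  have hlogxb : Real.log (x * b) = Real.log x + Real.log b :=
    Real.log_mul (by linarith) (by linarith)
  calc Real.log (a * Real.log (x * b)) ≤ Real.log (A * Real.log x) := by
        rw [hlogxb, hA, mul_assoc]
        gcongr
        nlinarith
    _ = Real.log A + Real.log (Real.log x) := Real.log_mul (by linarith) (by linarith)
    _ ≤ Real.log A * (Real.log (Real.log x) / Real.log (Real.log 3)) +
          Real.log (Real.log x) := by
        gcongr
        exact le_mul_of_one_le_right hlogA ((one_le_div hloglog3).mpr hloglog)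
    _ = (Real.log A / Real.log (Real.log 3) + 1) * Real.log (Real.log x) := by ring

theorem re_sub_dist_le_re (w c : ℂ) : c.re - dist w c ≤ w.re := by
  have := (abs_re_le_norm (c - w)).trans_eq (dist_eq_norm c w).symm
  rw [sub_re, dist_comm] at this
  linarith [le_abs_self (c.re - w.re)]

end ElementaryInequalities

section LogarithmicDerivative

theorem iteratedDeriv_two_div_eq {𝕜 : Type*} [NontriviallyNormedField 𝕜] {f : 𝕜 → 𝕜} {z : 𝕜}
    (hf : DifferentiableAt 𝕜 f z) (hf' : DifferentiableAt 𝕜 (deriv f) z) (hz : f z ≠ 0) :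
    iteratedDeriv 2 f z / f z = deriv (logDeriv f) z + logDeriv f z ^ 2 := by
  rw [iteratedDeriv_succ, iteratedDeriv_one, logDeriv, deriv_div hf' hf hz, Pi.div_apply]
  field_simp
  ring

variable {f : ℂ → ℂ} {c z : ℂ} {R M : ℝ}

theorem differentiableOn_logDeriv {U : Set ℂ} (hU : IsOpen U) (hf : DifferentiableOn ℂ f U)
    (hne : ∀ w ∈ U, f w ≠ 0) : DifferentiableOn ℂ (logDeriv f) U :=
  (hf.deriv hU).div hf hne

theorem norm_iteratedDeriv_two_div_le {U : Set ℂ} {B δ : ℝ} (hU : IsOpen U)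
    (hf : DifferentiableOn ℂ f U) (hne : ∀ w ∈ U, f w ≠ 0) (hδ : 0 < δ)
    (hball : closedBall z δ ⊆ U) (hB : ∀ w ∈ closedBall z δ, ‖logDeriv f w‖ ≤ B) :
    ‖iteratedDeriv 2 f z / f z‖ ≤ B / δ + B ^ 2 := by
  have hz : z ∈ closedBall z δ := mem_closedBall_self hδ.le
  have hUz : U ∈ 𝓝 z := hU.mem_nhds (hball hz)
  have hderiv : ‖deriv (logDeriv f) z‖ ≤ B / δ :=
    norm_deriv_le_of_forall_mem_sphere_norm_le hδ
      (((differentiableOn_logDeriv hU hf hne).mono hball).diffContOnCl_ball subset_rfl)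
      fun w hw ↦ hB w (sphere_subset_closedBall hw)
  rw [iteratedDeriv_two_div_eq (hf.differentiableAt hUz) ((hf.deriv hU).differentiableAt hUz)
    (hne z (hball hz))]
  refine (norm_add_le _ _).trans (add_le_add hderiv ?_)
  rw [norm_pow]
  exact pow_le_pow_left₀ (norm_nonneg _) (hB z hz) 2

theorem exists_hasDerivAt_logDeriv_eq_mul_exp (hf : DifferentiableOn ℂ f (ball c R))
    (hne : ∀ w ∈ ball c R, f w ≠ 0) :
    ∃ g : ℂ → ℂ, g c = 0 ∧ (∀ w ∈ ball c R, HasDerivAt g (logDeriv f w) w) ∧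
      ∀ w ∈ ball c R, f w = f c * exp (g w) := by
  obtain ⟨g, hgc, hg⟩ :=
    (differentiableOn_logDeriv isOpen_ball hf hne).isExactOn_ball.with_val_at c 0
  have hexp : DifferentiableOn ℂ (fun w ↦ exp (g w)) (ball c R) := fun w hw ↦
    (hg w hw).cexp.differentiableAt.differentiableWithinAt
  have hlogDeriv : EqOn (logDeriv f) (logDeriv fun w ↦ exp (g w)) (ball c R) := fun w hw ↦ by
    rw [logDeriv_apply (fun w ↦ exp (g w)), (hg w hw).cexp.deriv,
      mul_div_cancel_left₀ _ (exp_ne_zero _)]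
  obtain ⟨a, -, ha⟩ := (logDeriv_eqOn_iff hf hexp isOpen_ball (convex_ball c R).isPreconnected
    (fun _ _ ↦ exp_ne_zero _) hne).mp hlogDeriv
  refine ⟨g, hgc, hg, fun w hw ↦ ?_⟩
  have hac : f c = a := by simpa [hgc] using ha (mem_ball_self (pos_of_mem_ball hw))
  simpa [hac] using ha hw

theorem norm_le_of_re_le_of_eq_zero {g : ℂ → ℂ} (hM : 0 < M)
    (hg : DifferentiableOn ℂ g (ball c R)) (hre : ∀ w ∈ ball c R, (g w).re ≤ M)
    (hgc : g c = 0) (hz : z ∈ ball c R) :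
    ‖g z‖ ≤ 2 * M * dist z c / (R - dist z c) := by
  have hshift : MapsTo (fun w ↦ c + w) (ball 0 R) (ball c R) := fun w hw ↦ by simpa using hw
  have hz' : z - c ∈ ball 0 R := by simpa [dist_eq_norm] using hz
  have := borelCaratheodory_zero (f := fun w ↦ g (c + w)) hM (hg.comp (by fun_prop) hshift)
    (fun w hw ↦ hre _ (hshift hw)) (pos_of_mem_ball hz) hz' (by simpa using hgc)
  simpa [dist_eq_norm] using this

theorem norm_logDeriv_le_of_norm_le_exp_mul (hM : 0 < M) (hf : DifferentiableOn ℂ f (ball c R))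
    (hne : ∀ w ∈ ball c R, f w ≠ 0) (hbound : ∀ w ∈ ball c R, ‖f w‖ ≤ Real.exp M * ‖f c‖)
    (hz : z ∈ ball c R) :
    ‖logDeriv f z‖ ≤ 8 * R * M / (R - dist z c) ^ 2 := by
  obtain ⟨g, hgc, hg, hfg⟩ := exists_hasDerivAt_logDeriv_eq_mul_exp hf hne
  have hgd : DifferentiableOn ℂ g (ball c R) := fun w hw ↦
    (hg w hw).differentiableAt.differentiableWithinAt
  have hR : 0 < R := pos_of_mem_ball hz
  have hre (w : ℂ) (hw : w ∈ ball c R) : (g w).re ≤ M := by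
    have hw' := hbound w hw
    rw [hfg w hw, norm_mul, norm_exp, mul_comm] at hw'
    have hfc : 0 < ‖f c‖ := norm_pos_iff.mpr (hne c (mem_ball_self hR))
    exact Real.exp_le_exp.mp (le_of_mul_le_mul_right hw' hfc)
  rw [mem_ball] at hz
  set ρ : ℝ := (R - dist z c) / 2 with hρ
  have hρ0 : 0 < ρ := by linarith
  have hclosedBall : closedBall z ρ ⊆ ball c R := closedBall_subset_ball' (by linarith)
  have hsphere (w : ℂ) (hw : w ∈ sphere z ρ) : ‖g w‖ ≤ 2 * M * R / ρ := by
    have hwR : w ∈ ball c R := hclosedBall (sphere_subset_closedBall hw)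
    have hwc : dist w c ≤ R - ρ := by
      linarith [dist_triangle w z c, mem_sphere.mp hw]
    refine (norm_le_of_re_le_of_eq_zero hM hgd hre hgc hwR).trans ?_
    gcongr <;> linarith
  calc ‖logDeriv f z‖ = ‖deriv g z‖ := by rw [(hg z hz).deriv]
    _ ≤ 2 * M * R / ρ / ρ := norm_deriv_le_of_forall_mem_sphere_norm_le hρ0
        (hgd.mono hclosedBall |>.diffContOnCl_ball subset_rfl) hsphere
    _ = 8 * R * M / (R - dist z c) ^ 2 := by rw [hρ]; field_simp; ring

end LogarithmicDerivative

section ThreeCircles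

variable {E : Type*} [NormedAddCommGroup E] [NormedSpace ℂ E] {F : ℂ → E} {c z : ℂ}

open Complex.HadamardThreeLines in
theorem norm_le_interp_of_mem_annulus {r₁ r₂ M₁ M₂ : ℝ} (hr₁ : 0 < r₁) (hr : r₁ < r₂)
    (hF : DifferentiableOn ℂ F (closedBall c r₂ \ ball c r₁))
    (hM₁ : ∀ w ∈ sphere c r₁, ‖F w‖ ≤ M₁) (hM₂ : ∀ w ∈ sphere c r₂, ‖F w‖ ≤ M₂)
    (hz : z ∈ closedBall c r₂ \ ball c r₁) :
    ‖F z‖ ≤ M₁ ^ (1 - (Real.log (dist z c) - Real.log r₁) / (Real.log r₂ - Real.log r₁)) *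
      M₂ ^ ((Real.log (dist z c) - Real.log r₁) / (Real.log r₂ - Real.log r₁)) := by
  have hr₂ : 0 < r₂ := hr₁.trans hr
  have hdist (w : ℂ) : dist (c + exp w) c = Real.exp w.re := by simp [dist_eq_norm, norm_exp]
  have hmaps : MapsTo (fun w ↦ c + exp w) (verticalClosedStrip (Real.log r₁) (Real.log r₂))
      (closedBall c r₂ \ ball c r₁) := fun w hw ↦ by
    rw [Set.mem_sdiff, mem_closedBall, mem_ball, not_lt, hdist, ← Real.le_log_iff_exp_le hr₂,
      ← Real.log_le_iff_le_exp hr₁]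
    exact hw.symm
  have hclosure : closure (verticalStrip (Real.log r₁) (Real.log r₂)) ⊆
      verticalClosedStrip (Real.log r₁) (Real.log r₂) :=
    closure_minimal (preimage_mono Ioo_subset_Icc_self) (isClosed_Icc.preimage continuous_re)
  obtain ⟨B, hB⟩ := ((isCompact_closedBall c r₂).diff isOpen_ball).exists_bound_of_continuousOn
    hF.continuousOn
  have hdistz : 0 < dist z c := hr₁.trans_le (not_lt.mp hz.2)
  have hlog_re : (log (z - c)).re = Real.log (dist z c) := by rw [log_re, dist_eq_norm]
  have hlog_mem : log (z - c) ∈ verticalClosedStrip (Real.log r₁) (Real.log r₂) := by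
    rw [verticalClosedStrip, mem_preimage, hlog_re]
    exact ⟨Real.log_le_log hr₁ (not_lt.mp hz.2), Real.log_le_log hdistz hz.1⟩
  have key := norm_le_interp_of_mem_verticalClosedStrip' (f := fun w ↦ F (c + exp w))
    (a := M₁) (b := M₂) (Real.log_lt_log hr₁ hr) hlog_mem
    ((hF.comp (by fun_prop) hmaps).mono hclosure).diffContOnCl
    ⟨B, forall_mem_image.mpr fun w hw ↦ hB _ (hmaps hw)⟩
    (fun w hw ↦ hM₁ _ <| by rw [mem_sphere, hdist, show w.re = _ from hw, Real.exp_log hr₁])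
    (fun w hw ↦ hM₂ _ <| by rw [mem_sphere, hdist, show w.re = _ from hw, Real.exp_log hr₂])
  rwa [exp_log (sub_ne_zero.mpr (dist_pos.mp hdistz)), add_sub_cancel, hlog_re] at key

variable {r K M δ : ℝ}

-- The interpolation exponent of the outer bound is `O(δ)`, so the outer bound `M` enters only
-- through `M ^ O(δ)`, which is bounded once `δ` is of order `1 / log M`.
theorem norm_le_exp_one_mul_div_of_norm_le_div_one_sub_dist (hδ : 0 < δ) (hδ' : δ ≤ 1 / 3)
    (hδr : 1 + δ ≤ r) (hδM : 3 * δ * Real.log M ≤ Real.log r) (hK : 1 ≤ K) (hM : 1 ≤ M)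
    (hF : DifferentiableOn ℂ F (closedBall c r))
    (hinner : ∀ w ∈ ball c 1, ‖F w‖ ≤ K / (1 - dist w c)) (houter : ∀ w ∈ sphere c r, ‖F w‖ ≤ M)
    (hz : z ∈ closedBall c (1 + δ)) :
    ‖F z‖ ≤ Real.exp 1 * (K / δ) := by
  have hinner' (w : ℂ) (hw : dist w c ≤ 1 - δ) : ‖F w‖ ≤ K / δ := by
    refine (hinner w (mem_ball.mpr (by linarith))).trans ?_
    gcongr
    linarith
  rw [mem_closedBall] at hz
  rcases le_or_gt (dist z c) (1 - δ) with hzδ | hzδ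
  · exact (hinner' z hzδ).trans <|
      le_mul_of_one_le_left (by positivity) (Real.one_le_exp zero_le_one)
  set θ := (Real.log (dist z c) - Real.log (1 - δ)) / (Real.log r - Real.log (1 - δ)) with hθ
  have hδ1 : 0 < 1 - δ := by linarith
  have hlogr : 0 < Real.log r := Real.log_pos (by linarith)
  have hlogδ : Real.log (1 - δ) ≤ 0 := Real.log_nonpos hδ1.le (by linarith)
  have hθ0 : 0 ≤ θ :=
    div_nonneg (sub_nonneg.mpr (Real.log_le_log hδ1 hzδ.le)) (by linarith)
  have hθM : Real.log M * θ ≤ 1 := by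
    rw [hθ, mul_div_assoc', div_le_one (by linarith)]
    nlinarith [log_sub_log_one_sub_le hδ' hzδ.le hz, Real.log_nonneg hM]
  have hKδ : 1 ≤ K / δ := by rw [le_div_iff₀ hδ]; linarith
  calc ‖F z‖ ≤ (K / δ) ^ (1 - θ) * M ^ θ :=
        norm_le_interp_of_mem_annulus hδ1 (by linarith) (hF.mono sdiff_subset)
          (fun w hw ↦ hinner' w hw.le) houter ⟨by simpa using hz.trans hδr, by simpa using hzδ.le⟩
    _ ≤ (K / δ) ^ (1 : ℝ) * Real.exp 1 := by
        gcongr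
        · linarith
        · rw [Real.rpow_def_of_pos (by linarith)]
          exact Real.exp_le_exp.mpr hθM
    _ = Real.exp 1 * (K / δ) := by rw [Real.rpow_one, mul_comm]

end ThreeCircles

section LSeries

open LSeries

theorem norm_LSeries_le_norm_LSeries_re {f : ℕ → ℂ} {g : ℕ → ℝ} {s : ℂ}
    (hfg : ∀ n, ‖f n‖ ≤ g n) (hg : LSeriesSummable (fun n ↦ (g n : ℂ)) s.re) :
    ‖LSeries f s‖ ≤ ‖LSeries (fun n ↦ (g n : ℂ)) s.re‖ := by
  have hg0 (n : ℕ) : 0 ≤ g n := (norm_nonneg _).trans (hfg n)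
  have hterm (n : ℕ) : ‖term f s n‖ ≤ ‖term (fun n ↦ (g n : ℂ)) s.re n‖ :=
    (norm_term_le_of_re_le_re f (ofReal_re s.re).le n).trans <| norm_term_le _ <| by
      simpa [abs_of_nonneg (hg0 n)] using hfg n
  have hsummable : Summable fun n ↦ ‖term f s n‖ :=
    hg.norm.of_nonneg_of_le (fun _ ↦ norm_nonneg _) hterm
  have hterm_eq (n : ℕ) : term (fun n ↦ (g n : ℂ)) s.re n =
      (‖term (fun n ↦ (g n : ℂ)) s.re n‖ : ℂ) := by
    rcases eq_or_ne n 0 with rfl | hn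
    · simp
    · rw [norm_term_eq, if_neg hn, term_of_ne_zero hn]
      simp [abs_of_nonneg (hg0 n), ofReal_cpow]
  calc ‖LSeries f s‖ ≤ ∑' n, ‖term f s n‖ := norm_tsum_le_tsum_norm hsummable
    _ ≤ ∑' n, ‖term (fun n ↦ (g n : ℂ)) s.re n‖ := hsummable.tsum_le_tsum hterm hg.norm
    _ ≤ ‖((∑' n, ‖term (fun n ↦ (g n : ℂ)) s.re n‖ : ℝ) : ℂ)‖ := by
        rw [norm_real]
        exact Real.le_norm_self _
    _ = ‖LSeries (fun n ↦ (g n : ℂ)) s.re‖ := by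
        rw [ofReal_tsum, LSeries, tsum_congr hterm_eq]

/-- The summatory function `t ↦ ∑_{1 ≤ k ≤ t} f k`; as in an L-series, the sum starts at `k = 1`. -/
noncomputable def summatory (f : ℕ → ℂ) (t : ℝ) : ℂ := ∑ k ∈ Finset.Icc 1 ⌊t⌋₊, f k

theorem summatory_of_lt_one (f : ℕ → ℂ) {t : ℝ} (ht : t < 1) : summatory f t = 0 := by
  simp [summatory, Nat.floor_eq_zero.mpr ht]

theorem measurable_summatory (f : ℕ → ℂ) : Measurable (summatory f) :=
  (measurable_from_nat (f := fun n ↦ ∑ k ∈ Finset.Icc 1 n, f k)).comp Nat.measurable_floor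

theorem mellin_summatory_neg (f : ℕ → ℂ) (s : ℂ) :
    mellin (summatory f) (-s) = ∫ t in Ioi (1 : ℝ), summatory f t * (t : ℂ) ^ (-(s + 1)) := by
  have hzero : ∀ t ∈ Ioi (0 : ℝ) \ Ici 1, (t : ℂ) ^ (-s - 1) • summatory f t = 0 :=
    fun t ht ↦ by rw [summatory_of_lt_one f (not_le.mp ht.2), smul_zero]
  rw [mellin, MeasureTheory.setIntegral_eq_of_subset_of_forall_sdiff_eq_zero measurableSet_Ioi
    (Ici_subset_Ioi.mpr one_pos) hzero, MeasureTheory.integral_Ici_eq_integral_Ioi]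
  simp only [smul_eq_mul, mul_comm, neg_add']

theorem norm_integral_mul_cpow_le {S : ℝ → ℂ} {B r : ℝ} {s : ℂ}
    (hS : ∀ t, 1 < t → ‖S t‖ ≤ B * t ^ r) (hs : r < s.re) :
    ‖∫ t in Ioi (1 : ℝ), S t * (t : ℂ) ^ (-(s + 1))‖ ≤ B / (s.re - r) := by
  have hexponent : r - s.re - 1 < -1 := by linarith
  calc ‖∫ t in Ioi (1 : ℝ), S t * (t : ℂ) ^ (-(s + 1))‖
      ≤ ∫ t in Ioi (1 : ℝ), B * t ^ (r - s.re - 1) := by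
        refine MeasureTheory.norm_integral_le_of_norm_le
          ((integrableOn_Ioi_rpow_of_lt hexponent one_pos).const_mul _)
          ((MeasureTheory.ae_restrict_mem measurableSet_Ioi).mono fun t ht ↦ ?_)
        have ht0 : 0 < t := one_pos.trans ht
        rw [norm_mul, norm_cpow_eq_rpow_re_of_pos ht0]
        calc ‖S t‖ * t ^ (-(s + 1)).re ≤ B * t ^ r * t ^ (-(s + 1)).re := by
              gcongr
              exact hS t ht
          _ = B * t ^ (r - s.re - 1) := by
              rw [mul_assoc, ← Real.rpow_add ht0]
              congr 2
              simp only [neg_re, add_re, one_re]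
              ring
    _ = B / (s.re - r) := by
        rw [MeasureTheory.integral_const_mul, integral_Ioi_rpow_of_lt hexponent one_pos,
          Real.one_rpow, sub_add_cancel, neg_div, ← div_neg, neg_sub, mul_one_div]

section BoundedSummatory

variable {f : ℕ → ℂ} {B : ℝ}

theorem isBigO_sum_Icc_rpow_zero (hB : ∀ t, ‖summatory f t‖ ≤ B) :
    (fun n : ℕ ↦ ∑ k ∈ Finset.Icc 1 n, f k) =O[atTop] fun n ↦ (n : ℝ) ^ (0 : ℝ) :=
  .of_bound B <| .of_forall fun n ↦ by simpa [summatory] using hB n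

theorem LSeriesSummable_of_norm_summatory_le (hB : ∀ t, ‖summatory f t‖ ≤ B) {s : ℂ}
    (hs : 1 < s.re) : LSeriesSummable f s := by
  refine LSeriesSummable_of_bounded_of_one_lt_re (m := B + B) (fun n hn ↦ ?_) hs
  obtain ⟨m, rfl⟩ := Nat.exists_eq_succ_of_ne_zero hn
  have hdiff : f (m + 1) = summatory f (m + 1 : ℕ) - summatory f m := by
    simp [summatory, Finset.sum_Icc_succ_top, -Nat.cast_add]
  rw [Nat.succ_eq_add_one, hdiff]
  exact (norm_sub_le _ _).trans (add_le_add (hB _) (hB _))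

theorem differentiableAt_mellin_summatory_neg (hB : ∀ t, ‖summatory f t‖ ≤ B) {s : ℂ}
    (hs : 0 < s.re) : DifferentiableAt ℂ (fun z ↦ mellin (summatory f) (-z)) s := by
  refine DifferentiableAt.comp (g := mellin (summatory f)) (f := fun z : ℂ ↦ -z) s
    (mellin_differentiableAt_of_isBigO_rpow (a := 0) (b := -s.re - 1) ?_ ?_ ?_ ?_ ?_)
    differentiableAt_id.neg
  · refine (MeasureTheory.LocallyIntegrable.mono (MeasureTheory.locallyIntegrable_const B)
      (measurable_summatory f).aestronglyMeasurable ?_).locallyIntegrableOn _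
    exact .of_forall fun t ↦ (hB t).trans (Real.le_norm_self B)
  · exact .of_bound B <| .of_forall fun t ↦ by simpa using hB t
  · simpa using hs
  · refine (Asymptotics.isBigO_zero _ _).congr' ?_ .rfl
    filter_upwards [mem_nhdsWithin_of_mem_nhds (Iio_mem_nhds zero_lt_one)] with t ht
    exact (summatory_of_lt_one f ht).symm
  · simp

-- Both sides are holomorphic on `Re s > 0` and agree on `Re s > 1` by partial summation.
theorem eq_mul_integral_summatory_of_eq_LSeries (hB : ∀ t, ‖summatory f t‖ ≤ B) {F : ℂ → ℂ}
    (hF : DifferentiableOn ℂ F {s | 0 < s.re}) (hFf : ∀ s, 1 < s.re → F s = LSeries f s) {s : ℂ}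
    (hs : 0 < s.re) :
    F s = s * ∫ t in Ioi (1 : ℝ), summatory f t * (t : ℂ) ^ (-(s + 1)) := by
  have hopen (a : ℝ) : IsOpen {z : ℂ | a < z.re} := isOpen_lt continuous_const continuous_re
  have hright : DifferentiableOn ℂ (fun z ↦ z * mellin (summatory f) (-z)) {z | 0 < z.re} :=
    fun z hz ↦ (differentiableAt_id.mul
      (differentiableAt_mellin_summatory_neg hB hz)).differentiableWithinAt
  have hnear : F =ᶠ[𝓝 2] fun z ↦ z * mellin (summatory f) (-z) := by
    filter_upwards [(hopen 1).mem_nhds (show 1 < (2 : ℂ).re by simp)] with z (hz : 1 < z.re)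
    rw [hFf z hz, mellin_summatory_neg]
    exact LSeries_eq_mul_integral f le_rfl (by linarith)
      (LSeriesSummable_of_norm_summatory_le hB hz) (isBigO_sum_Icc_rpow_zero hB)
  rw [← mellin_summatory_neg]
  exact (hF.analyticOnNhd (hopen 0)).eqOn_of_preconnected_of_eventuallyEq
    (hright.analyticOnNhd (hopen 0)) (convex_halfSpace_re_gt 0).isPreconnected
    (by simp) hnear hs

theorem norm_le_of_norm_summatory_le (hB : ∀ t, ‖summatory f t‖ ≤ B) {F : ℂ → ℂ}
    (hF : DifferentiableOn ℂ F {s | 0 < s.re}) (hFf : ∀ s, 1 < s.re → F s = LSeries f s) {s : ℂ}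
    (hs : 0 < s.re) : ‖F s‖ ≤ ‖s‖ * (B / s.re) := by
  rw [eq_mul_integral_summatory_of_eq_LSeries hB hF hFf hs, norm_mul]
  gcongr
  simpa using norm_integral_mul_cpow_le (r := 0) (fun t _ ↦ by simpa using hB t) hs

end BoundedSummatory

open ArithmeticFunction in
theorem norm_LSeries_vonMangoldt_le {σ : ℝ} (hσ : 1 < σ) :
    ‖LSeries (fun n ↦ (Λ n : ℂ)) σ‖ ≤ σ * ((Real.log 4 + 4) / (σ - 1)) := by
  have hψ (t : ℝ) : summatory (fun n ↦ (Λ n : ℂ)) t = (Chebyshev.psi t : ℂ) := by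
    simp [summatory, Chebyshev.psi, ← Finset.Icc_add_one_left_eq_Ioc]
  have hψ_norm (t : ℝ) (ht : 0 ≤ t) :
      ‖summatory (fun n ↦ (Λ n : ℂ)) t‖ ≤ (Real.log 4 + 4) * t ^ (1 : ℝ) := by
    rw [hψ, norm_real, Real.norm_of_nonneg (Chebyshev.psi_nonneg t), Real.rpow_one]
    exact Chebyshev.psi_le_const_mul_self ht
  have hbigO : (fun n : ℕ ↦ ∑ k ∈ Finset.Icc 1 n, (Λ k : ℂ)) =O[atTop]
      fun n ↦ (n : ℝ) ^ (1 : ℝ) :=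
    .of_bound (Real.log 4 + 4) <| .of_forall fun n ↦ by
      simpa [summatory] using hψ_norm n n.cast_nonneg
  have habel : LSeries (fun n ↦ (Λ n : ℂ)) σ =
      σ * ∫ t in Ioi (1 : ℝ), summatory (fun n ↦ (Λ n : ℂ)) t * (t : ℂ) ^ (-((σ : ℂ) + 1)) :=
    LSeries_eq_mul_integral _ zero_le_one (by simpa using hσ)
      (LSeriesSummable_vonMangoldt (by simpa using hσ)) hbigO
  rw [habel, norm_mul, norm_real, Real.norm_of_nonneg (by linarith)]
  gcongr
  simpa using norm_integral_mul_cpow_le (s := σ) (fun t ht ↦ hψ_norm t (by linarith))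
    (by simpa using hσ)

end LSeries

section DirichletLFunction

open DirichletCharacter

variable {N : ℕ} [NeZero N]

theorem sum_range_natCast_zmod {E : Type*} [AddCommMonoid E] (Φ : ZMod N → E) :
    ∑ k ∈ Finset.range N, Φ k = ∑ j, Φ j :=
  Finset.sum_bij' (fun k _ ↦ (k : ZMod N)) (fun j _ ↦ j.val) (by simp)
    (fun j _ ↦ Finset.mem_range.mpr j.val_lt)
    (fun _ hk ↦ ZMod.val_cast_of_lt (Finset.mem_range.mp hk)) (by simp) (by simp)

theorem norm_sum_range_natCast_zmod_le {E : Type*} [SeminormedAddCommGroup E] {Φ : ZMod N → E}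
    {C : ℝ} (hΦ : ∑ j, Φ j = 0) (hC : ∀ j, ‖Φ j‖ ≤ C) (n : ℕ) :
    ‖∑ k ∈ Finset.range n, Φ k‖ ≤ N * C := by
  have hC0 : 0 ≤ C := (norm_nonneg _).trans (hC 0)
  have hperiods (m : ℕ) : ∑ k ∈ Finset.range (N * m), Φ k = 0 := by
    induction m with
    | zero => simp
    | succ m ih => simp [Nat.mul_succ, Finset.sum_range_add, ih, sum_range_natCast_zmod Φ, hΦ]
  calc ‖∑ k ∈ Finset.range n, Φ k‖ = ‖∑ k ∈ Finset.range (n % N), Φ k‖ := by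
        conv_lhs => rw [← Nat.div_add_mod n N, Finset.sum_range_add, hperiods]
        simp
    _ ≤ ∑ _k ∈ Finset.range (n % N), C := norm_sum_le_of_le _ fun k _ ↦ hC k
    _ = (n % N : ℕ) * C := by simp
    _ ≤ N * C := by
        gcongr
        exact (Nat.mod_lt n (NeZero.pos N)).le

variable {χ : DirichletCharacter ℂ N}

theorem three_le_of_ne_one (hχ : χ ≠ 1) : 3 ≤ N := by
  by_contra! hN
  have hN0 : 0 < N := NeZero.pos N
  have : Subsingleton (ZMod N)ˣ := by
    interval_cases N
    · infer_instance
    · exact ⟨by decide⟩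
  exact hχ (MulChar.ext fun u ↦ by simp [Subsingleton.elim u 1])

theorem ne_one_of_isPrimitive (hN : N ≠ 1) (hχ : χ.IsPrimitive) : χ ≠ 1 := by
  rintro rfl
  exact hN (hχ.symm.trans conductor_one)

theorem norm_summatory_character_le (hχ : χ ≠ 1) (t : ℝ) :
    ‖summatory (fun n ↦ χ n) t‖ ≤ N := by
  have hsum : ∑ j : ZMod N, χ (j + 1) = 0 :=
    (Equiv.sum_comp (Equiv.addRight (1 : ZMod N)) fun j ↦ χ j).trans
      (MulChar.sum_eq_zero_of_ne_one hχ)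
  have hshift : summatory (fun n ↦ χ n) t = ∑ k ∈ Finset.range ⌊t⌋₊, χ (k + 1) := by
    rw [summatory, Finset.range_eq_Ico, ← Finset.Ico_add_one_right_eq_Icc,
      ← Finset.sum_Ico_add' (fun n : ℕ ↦ χ n) 0 ⌊t⌋₊ 1]
    simp
  simpa [hshift] using
    norm_sum_range_natCast_zmod_le hsum (fun j ↦ χ.norm_le_one (j + 1)) ⌊t⌋₊

theorem norm_LFunction_le (hχ : χ ≠ 1) {s : ℂ} (hs : 0 < s.re) :
    ‖LFunction χ s‖ ≤ ‖s‖ * (N / s.re) :=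
  norm_le_of_norm_summatory_le (norm_summatory_character_le hχ)
    (differentiable_LFunction hχ).differentiableOn (fun _ ↦ LFunction_eq_LSeries χ) hs

variable (χ)

open ArithmeticFunction ArithmeticFunction.Moebius in
theorem one_le_norm_zeta_mul_norm_LFunction {s : ℂ} (hs : 1 < s.re) :
    1 ≤ ‖riemannZeta s.re‖ * ‖LFunction χ s‖ := by
  have hre : 1 < (s.re : ℂ).re := hs
  have hχμ (n : ℕ) : ‖χ n * (μ n : ℂ)‖ ≤ (1 : ℝ) := by
    rw [norm_mul, norm_intCast]
    exact mul_le_one₀ (χ.norm_le_one _) (abs_nonneg _) (mod_cast abs_moebius_le_one)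
  have hinv := congrArg norm (DirichletCharacter.LSeries.mul_mu_eq_one χ hs)
  rw [norm_mul, norm_one, ← LFunction_eq_LSeries χ hs, mul_comm] at hinv
  rw [← hinv, ← LSeries_one_eq_riemannZeta hre]
  gcongr
  simpa [Pi.one_def, Pi.mul_def] using norm_LSeries_le_norm_LSeries_re (g := fun _ ↦ 1) hχμ
    (by simpa [Pi.one_def] using LSeriesSummable_one_iff.mpr hre)

theorem one_le_two_mul_norm_LFunction {s : ℂ} (hs : s.re = 2) : 1 ≤ 2 * ‖LFunction χ s‖ := by
  have hζ : ‖riemannZeta s.re‖ ≤ 2 := by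
    rw [hs, ofReal_ofNat, riemannZeta_two, norm_div, norm_pow, norm_real,
      Real.norm_of_nonneg Real.pi_nonneg]
    norm_num
    nlinarith [Real.pi_lt_d2, Real.pi_pos]
  refine (one_le_norm_zeta_mul_norm_LFunction χ (by linarith)).trans ?_
  gcongr

open ArithmeticFunction in
theorem norm_logDeriv_LFunction_le {s : ℂ} (hs : 1 < s.re) :
    ‖logDeriv (LFunction χ) s‖ ≤ s.re * ((Real.log 4 + 4) / (s.re - 1)) := by
  have hχΛ (n : ℕ) : ‖χ n * (Λ n : ℂ)‖ ≤ Λ n := by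
    rw [norm_mul, norm_real, Real.norm_of_nonneg vonMangoldt_nonneg]
    exact mul_le_of_le_one_left vonMangoldt_nonneg (χ.norm_le_one _)
  rw [logDeriv_apply, deriv_LFunction_eq_deriv_LSeries χ hs, LFunction_eq_LSeries χ hs,
    ← norm_neg, ← neg_div, ← LSeries_twist_vonMangoldt_eq χ hs]
  exact (norm_LSeries_le_norm_LSeries_re hχΛ (LSeriesSummable_vonMangoldt hs)).trans
    (norm_LSeries_vonMangoldt_le hs)

end DirichletLFunction

section GRH

open DirichletCharacter

/-- A constant multiple of the usual analytic conductor `N (|t| + 4)` of a Dirichlet character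
modulo `N` at height `t`; the factor `4` makes `‖L(w, χ)‖ ≤ analyticConductor N t * ‖L(2 + it, χ)‖`
hold on the disc of radius `3 / 2` about `2 + it`. -/
noncomputable def analyticConductor (N : ℕ) (t : ℝ) : ℝ := N * (4 * (|t| + 4))

theorem three_le_analyticConductor (N : ℕ) [NeZero N] (t : ℝ) : 3 ≤ analyticConductor N t := by
  have hN : (1 : ℝ) ≤ N := mod_cast NeZero.one_le
  unfold analyticConductor
  nlinarith [abs_nonneg t]

variable {N : ℕ} [NeZero N] {χ : DirichletCharacter ℂ N} {c s w : ℂ}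

theorem LFunction_ne_zero_of_GRHFor (hχ : χ ≠ 1) (hG : GRHFor χ) (hs : 1 / 2 < s.re) :
    LFunction χ s ≠ 0 := by
  rcases lt_or_ge s.re 1 with hs1 | hs1
  · exact fun hzero ↦ hs.ne' (hG s (by linarith) hs1 hzero)
  · exact LFunction_ne_zero_of_one_le_re χ (.inl hχ) hs1

theorem norm_LFunction_le_analyticConductor_mul (hχ : χ ≠ 1) (hc : c.re = 2)
    (hw : w ∈ ball c (3 / 2)) :
    ‖LFunction χ w‖ ≤ analyticConductor N c.im * ‖LFunction χ c‖ := by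
  rw [mem_ball] at hw
  have hre : 1 / 2 ≤ w.re := by linarith [re_sub_dist_le_re w c]
  have hnorm : ‖w‖ ≤ |c.im| + 4 := by
    have hwc : ‖w‖ ≤ dist w c + ‖c‖ := by
      simpa [dist_eq_norm] using norm_le_norm_sub_add w c
    have hcnorm : ‖c‖ ≤ 2 + |c.im| := by simpa [hc] using norm_le_abs_re_add_abs_im c
    linarith
  calc ‖LFunction χ w‖ ≤ ‖w‖ * (N / w.re) := norm_LFunction_le hχ (by linarith)
    _ ≤ (|c.im| + 4) * (N / (1 / 2)) := by gcongr
    _ ≤ (|c.im| + 4) * (N / (1 / 2)) * (2 * ‖LFunction χ c‖) :=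
        le_mul_of_one_le_right (by positivity) (one_le_two_mul_norm_LFunction χ hc)
    _ = analyticConductor N c.im * ‖LFunction χ c‖ := by rw [analyticConductor]; ring

theorem LFunction_ne_zero_of_mem_ball (hχ : χ ≠ 1) (hG : GRHFor χ) (hc : c.re = 2)
    (hw : w ∈ ball c (3 / 2)) : LFunction χ w ≠ 0 :=
  LFunction_ne_zero_of_GRHFor hχ hG (by linarith [re_sub_dist_le_re w c, mem_ball.mp hw])

theorem norm_logDeriv_LFunction_le_log_analyticConductor (hχ : χ ≠ 1) (hG : GRHFor χ)
    (hc : c.re = 2) (hw : w ∈ closedBall c (5 / 4)) :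
    ‖logDeriv (LFunction χ) w‖ ≤ 192 * Real.log (analyticConductor N c.im) := by
  have hQ : 3 ≤ analyticConductor N c.im := three_le_analyticConductor N c.im
  have hlogQ : 0 < Real.log (analyticConductor N c.im) := by linarith [one_lt_log_of_three_le hQ]
  rw [mem_closedBall] at hw
  calc ‖logDeriv (LFunction χ) w‖
      ≤ 8 * (3 / 2) * Real.log (analyticConductor N c.im) / (3 / 2 - dist w c) ^ 2 := by
        refine norm_logDeriv_le_of_norm_le_exp_mul hlogQ
          (differentiable_LFunction hχ).differentiableOn
          (fun z hz ↦ LFunction_ne_zero_of_mem_ball hχ hG hc hz) (fun z hz ↦ ?_)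
          (mem_ball.mpr (by linarith))
        rw [Real.exp_log (by linarith)]
        exact norm_LFunction_le_analyticConductor_mul hχ hc hz
    _ ≤ 8 * (3 / 2) * Real.log (analyticConductor N c.im) / (3 / 2 - 5 / 4) ^ 2 := by gcongr
    _ = 192 * Real.log (analyticConductor N c.im) := by ring

theorem norm_logDeriv_LFunction_le_div_one_sub_dist (χ : DirichletCharacter ℂ N) (hc : c.re = 2)
    (hw : w ∈ ball c 1) : ‖logDeriv (LFunction χ) w‖ ≤ 21 / (1 - dist w c) := by
  rw [mem_ball] at hw
  have hre : 1 - dist w c ≤ w.re - 1 := by linarith [re_sub_dist_le_re w c]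
  have hre3 : w.re ≤ 3 := by linarith [re_sub_dist_le_re c w, dist_comm c w]
  have hlog4 : Real.log 4 ≤ 3 := by
    linarith [Real.log_le_sub_one_of_pos (show (0 : ℝ) < 4 by norm_num)]
  have : 0 < 1 - dist w c := by linarith
  calc ‖logDeriv (LFunction χ) w‖ ≤ w.re * ((Real.log 4 + 4) / (w.re - 1)) :=
        norm_logDeriv_LFunction_le χ (by linarith)
    _ ≤ w.re * ((3 + 4) / (1 - dist w c)) := by
        gcongr
        linarith
    _ ≤ 3 * ((3 + 4) / (1 - dist w c)) := by gcongr
    _ = 21 / (1 - dist w c) := by ring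

theorem norm_logDeriv_LFunction_le_of_mem_closedBall {δ : ℝ} (hχ : χ ≠ 1) (hG : GRHFor χ)
    (hs : s.re = 1) (hδ : 0 < δ) (hδ' : δ ≤ 1 / 4)
    (hδQ : 3 * δ * Real.log (192 * Real.log (analyticConductor N s.im)) ≤ Real.log (5 / 4))
    (hw : w ∈ closedBall s δ) : ‖logDeriv (LFunction χ) w‖ ≤ 63 / δ := by
  have hre : (s + 1).re = 2 := by rw [add_re, one_re, hs]; norm_num
  have him : (s + 1).im = s.im := by simp
  have hlogQ : 1 < Real.log (analyticConductor N s.im) :=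
    one_lt_log_of_three_le (three_le_analyticConductor N s.im)
  have hdiff : DifferentiableOn ℂ (logDeriv (LFunction χ)) (closedBall (s + 1) (5 / 4)) :=
    (differentiableOn_logDeriv isOpen_ball (differentiable_LFunction hχ).differentiableOn
      fun _ hz ↦ LFunction_ne_zero_of_mem_ball hχ hG hre hz).mono
      (closedBall_subset_ball (by norm_num))
  have houter (z : ℂ) (hz : z ∈ sphere (s + 1) (5 / 4)) :
      ‖logDeriv (LFunction χ) z‖ ≤ 192 * Real.log (analyticConductor N s.im) := by
    simpa only [him] using norm_logDeriv_LFunction_le_log_analyticConductor hχ hG hre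
      (sphere_subset_closedBall hz)
  have hw' : w ∈ closedBall (s + 1) (1 + δ) :=
    closedBall_subset_closedBall' (by simp [add_comm]) hw
  calc ‖logDeriv (LFunction χ) w‖ ≤ Real.exp 1 * (21 / δ) :=
        norm_le_exp_one_mul_div_of_norm_le_div_one_sub_dist hδ (by linarith) (by linarith) hδQ
          (by norm_num) (by linarith) hdiff
          (fun _ ↦ norm_logDeriv_LFunction_le_div_one_sub_dist χ hre) houter hw'
    _ ≤ 3 * (21 / δ) := by gcongr; exact Real.exp_one_lt_three.le
    _ = 63 / δ := by ring

theorem norm_iteratedDeriv_two_LFunction_div_le (hχ : χ ≠ 1) (hG : GRHFor χ) (hs : s.re = 1) :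
    ‖iteratedDeriv 2 (LFunction χ) s / LFunction χ s‖ ≤
      10 ^ 6 * Real.log (192 * Real.log (analyticConductor N s.im)) ^ 2 := by
  have hlogQ : 1 < Real.log (analyticConductor N s.im) :=
    one_lt_log_of_three_le (three_le_analyticConductor N s.im)
  set l : ℝ := Real.log (192 * Real.log (analyticConductor N s.im))
  have hl : 1 < l := one_lt_log_of_three_le (by linarith)
  set δ : ℝ := 1 / (15 * l) with hδdef
  have hδ : 0 < δ := by positivity
  have hδl : δ * l = 1 / 15 := by rw [hδdef]; field_simp
  have hδ' : δ ≤ 1 / 4 := by nlinarith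
  have hδQ : 3 * δ * l ≤ Real.log (5 / 4) := by
    linarith [Real.one_sub_inv_le_log_of_pos (show (0 : ℝ) < 5 / 4 by norm_num)]
  have hball : closedBall s δ ⊆ {w | 1 / 2 < w.re} := fun w hw ↦ by
    rw [mem_ofPred_eq]
    linarith [re_sub_dist_le_re w s, mem_closedBall.mp hw]
  calc ‖iteratedDeriv 2 (LFunction χ) s / LFunction χ s‖ ≤ 63 / δ / δ + (63 / δ) ^ 2 :=
        norm_iteratedDeriv_two_div_le (isOpen_lt continuous_const continuous_re)
          (differentiable_LFunction hχ).differentiableOn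
          (fun _ ↦ LFunction_ne_zero_of_GRHFor hχ hG) hδ hball
          fun _ ↦ norm_logDeriv_LFunction_le_of_mem_closedBall hχ hG hs hδ hδ' hδQ
    _ = 907200 * l ^ 2 := by rw [hδdef]; field_simp; ring
    _ ≤ 10 ^ 6 * l ^ 2 := by gcongr; norm_num

end GRH

theorem second_log_deriv_L_bound_on_GRH_general (T : ℝ) :
    ∃ C : ℝ, 0 < C ∧ ∀ (N : ℕ) [NeZero N] (χ : DirichletCharacter ℂ N), χ ≠ 1 → GRHFor χ →
      DirichletCharacter.LFunction χ (1 + 2 * Complex.I * (T : ℂ)) ≠ 0 ∧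
      ‖iteratedDeriv 2 (DirichletCharacter.LFunction χ) (1 + 2 * Complex.I * (T : ℂ)) /
          DirichletCharacter.LFunction χ (1 + 2 * Complex.I * (T : ℂ))‖
        ≤ C * Real.log (Real.log N) ^ 2 := by
  obtain ⟨C, hC, hlog⟩ := exists_log_mul_log_mul_le (a := 192) (b := 4 * (|2 * T| + 4))
    (by norm_num) (by linarith [abs_nonneg (2 * T)])
  refine ⟨10 ^ 6 * C ^ 2, by positivity, fun N _ χ hχ hG ↦ ?_⟩
  set s : ℂ := 1 + 2 * Complex.I * (T : ℂ)
  have hre : s.re = 1 := by simp [s]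
  have him : s.im = 2 * T := by simp [s]
  refine ⟨LFunction_ne_zero_of_GRHFor hχ hG (by rw [hre]; norm_num), ?_⟩
  have hM : 1 ≤ 192 * Real.log (analyticConductor N s.im) := by
    linarith [one_lt_log_of_three_le (three_le_analyticConductor N s.im)]
  calc _ ≤ 10 ^ 6 * Real.log (192 * Real.log (analyticConductor N s.im)) ^ 2 :=
        norm_iteratedDeriv_two_LFunction_div_le hχ hG hre
    _ ≤ 10 ^ 6 * (C * Real.log (Real.log N)) ^ 2 := by
        gcongr
        · exact Real.log_nonneg hM
        · rw [him]
          exact hlog N (mod_cast three_le_of_ne_one hχ)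
    _ = 10 ^ 6 * C ^ 2 * Real.log (Real.log N) ^ 2 := by ring

/-- Under GRH, for primitive `χ` mod `N`, the ratio `L″/L` at `s = 1 + 2iT` is
`O_T((log log N)²)`. -/
theorem second_log_deriv_L_bound_on_GRH (T : ℝ) :
    ∃ C : ℝ, 0 < C ∧ ∀ (N : ℕ) [NeZero N], 3 ≤ N →
      ∀ χ : DirichletCharacter ℂ N, χ.IsPrimitive → GRHFor χ →
        DirichletCharacter.LFunction χ (1 + 2 * Complex.I * (T : ℂ)) ≠ 0 ∧
        ‖iteratedDeriv 2 (DirichletCharacter.LFunction χ) (1 + 2 * Complex.I * (T : ℂ)) /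
            DirichletCharacter.LFunction χ (1 + 2 * Complex.I * (T : ℂ))‖
          ≤ C * Real.log (Real.log N) ^ 2 := by
  obtain ⟨C, hC, hbound⟩ := second_log_deriv_L_bound_on_GRH_general T
  exact ⟨C, hC, fun N _ hN χ hχ ↦ hbound N χ (ne_one_of_isPrimitive (by lia) hχ)⟩
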